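/- arXiv:2107.00251 — 3 statements merged into one kernel-verified Lean document; each statement's English description precedes it below -/
import Mathlib

section
/- The minimum weighted L0 error over all isotonic functions g : V → ℝ is attained and equals ∑_{v ∈ V} w(v) − max{∑_{v ∈ C} w(v) : C an antichain of ≺ᵥ}. In particular, an isotonic regression constructed from a maximum-weight antichain of the violator relation is L0-optimal. -/
/-- The violator relation: `u ≺ᵥ v` iff `u < v` in the partial order and `f u > f v`. -/
def Viol {V : Type*} [PartialOrder V] (f : V → ℝ) (u v : V) : Prop :=
  u < v ∧ f v < f u

/-!
A set is an antichain of the violator relation exactly when `f` is monotone on it. The set where an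
isotonic function agrees with `f` is of this kind, so no isotonic function errs by less than the
total weight minus the maximum weight of an antichain. Conversely, the restriction of `f` to a
maximum-weight antichain `C` extends to an isotonic function, sending `v` to the largest value
of `f` on the elements of `C` below `v` (a lower bound of `f` on `C` if there are none), and this
attains the bound.
-/

theorem forall_not_viol_iff_monotoneOn {V : Type*} [PartialOrder V] {f : V → ℝ} {s : Set V} :
    (∀ u ∈ s, ∀ v ∈ s, ¬ Viol f u v) ↔ MonotoneOn f s := by
  refine ⟨fun hs u hu v hv huv => ?_, fun hf u hu v hv huv => ?_⟩
  · obtain rfl | hlt := huv.eq_or_lt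
    · exact le_rfl
    · exact not_lt.1 fun hvu => hs u hu v hv ⟨hlt, hvu⟩
  · exact (hf hu hv huv.1.le).not_gt huv.2

theorem exists_monotone_eqOn_of_monotoneOn {V α : Type*} [Preorder V] [LinearOrder α] [Nonempty α]
    {f : V → α} {C : Finset V} (hf : MonotoneOn f C) :
    ∃ g : V → α, Monotone g ∧ Set.EqOn g f C := by
  classical
  obtain ⟨m, hm⟩ := (C.finite_toSet.image f).bddBelow
  have m_le {v : V} (hv : v ∈ C) : m ≤ f v := hm (Set.mem_image_of_mem f hv)
  let g (v : V) : α := ({u ∈ C | u ≤ v} : Finset V).fold max m f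
  have g_le_iff {v : V} {a : α} : g v ≤ a ↔ m ≤ a ∧ ∀ u ∈ C, u ≤ v → f u ≤ a := by
    simp only [g, Finset.fold_max_le, Finset.mem_filter, and_imp]
  have le_g {u v : V} (hu : u ∈ C) (huv : u ≤ v) : f u ≤ g v := (g_le_iff.1 le_rfl).2 u hu huv
  refine ⟨g, fun v v' hv => ?_, fun v hv => ?_⟩
  · exact g_le_iff.2 ⟨(g_le_iff.1 le_rfl).1, fun u hu huv => le_g hu (huv.trans hv)⟩
  · exact (g_le_iff.2 ⟨m_le hv, fun u hu huv => hf hu hv huv⟩).antisymm (le_g hv le_rfl)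

/-- The values `∑ v ∈ C, w v` over the finite sets `C` on which `f` is monotone. For real-valued `f`
on a partial order these are the weights of the antichains of the violator relation; phrased through
`MonotoneOn`, they make sense on any preorder. -/
def monotoneOnWeights {V α R : Type*} [Preorder V] [Preorder α] [AddCommMonoid R] (f : V → α)
    (w : V → R) : Set R :=
  {x | ∃ C : Finset V, MonotoneOn f C ∧ x = ∑ v ∈ C, w v}

theorem exists_isGreatest_monotoneOnWeights {V α R : Type*} [Preorder V] [Finite V] [Preorder α]
    [AddCommMonoid R] [LinearOrder R] (f : V → α) (w : V → R) :
    ∃ x, IsGreatest (monotoneOnWeights f w) x := by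
  have hfin : (monotoneOnWeights f w).Finite :=
    (Set.finite_range fun C : Finset V => ∑ v ∈ C, w v).subset fun _ ⟨C, _, hx⟩ => ⟨C, hx.symm⟩
  have hne : (monotoneOnWeights f w).Nonempty := ⟨_, ∅, by simp [MonotoneOn], rfl⟩
  exact Set.exists_max_image _ id hfin hne

/-- The weighted L0 error of `g` as an approximation of `f`: the total weight of the points where
the two differ. Summing over these points, instead of multiplying by an indicator, lets the weights
live in an additive group. -/
def l0Error {V α R : Type*} [Fintype V] [DecidableEq α] [AddCommMonoid R] (f : V → α) (w : V → R)
    (g : V → α) : R :=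
  ∑ v with g v ≠ f v, w v

section L0Error

variable {V α R : Type*} [Fintype V]

theorem sum_mul_ite_eq_l0Error [DecidableEq α] [NonAssocSemiring R] (f : V → α) (w : V → R)
    (g : V → α) : ∑ v, w v * (if g v = f v then 0 else 1) = l0Error f w g := by
  simp only [l0Error, Finset.sum_filter, mul_ite, mul_zero, mul_one, ite_not]

theorem l0Error_eq_sub_sum_agree [DecidableEq α] [AddCommGroup R] (f : V → α) (w : V → R)
    (g : V → α) : l0Error f w g = ∑ v, w v - ∑ v with g v = f v, w v :=
  eq_sub_of_add_eq (Finset.sum_filter_not_add_sum_filter ..)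

theorem l0Error_le_of_eqOn [DecidableEq α] [AddCommGroup R] [PartialOrder R]
    [IsOrderedAddMonoid R] {f g : V → α} {w : V → R} {C : Finset V} (hw : ∀ v, 0 ≤ w v)
    (hgC : Set.EqOn g f C) : l0Error f w g ≤ ∑ v, w v - ∑ v ∈ C, w v := by
  have hsub : C ⊆ ({v | g v = f v} : Finset V) := fun v hv =>
    (Finset.mem_filter_univ v).2 (hgC hv)
  rw [l0Error_eq_sub_sum_agree]
  gcongr
  exact fun v _ _ => hw v

theorem sub_le_l0Error_of_monotone [DecidableEq α] [Preorder V] [Preorder α] [AddCommGroup R]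
    [Preorder R] [IsOrderedAddMonoid R] {f h : V → α} {w : V → R} {x : R}
    (hx : x ∈ upperBounds (monotoneOnWeights f w)) (hh : Monotone h) :
    ∑ v, w v - x ≤ l0Error f w h := by
  have hagree : MonotoneOn f ({v | h v = f v} : Finset V) :=
    (hh.monotoneOn _).congr fun v hv => by simpa using hv
  rw [l0Error_eq_sub_sum_agree]
  gcongr
  exact hx ⟨_, hagree, rfl⟩

end L0Error

theorem L0_min_eq_total_sub_max_antichain_general {V α R : Type*} [Preorder V] [Fintype V]
    [LinearOrder α] [Nonempty α] [AddCommGroup R] [LinearOrder R] [IsOrderedAddMonoid R]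
    (f : V → α) (w : V → R) (hw : ∀ v, 0 ≤ w v) :
    ∃ g : V → α, Monotone g ∧ (∀ h : V → α, Monotone h → l0Error f w g ≤ l0Error f w h) ∧
      ∃ x, IsGreatest (monotoneOnWeights f w) x ∧ l0Error f w g = ∑ v, w v - x := by
  obtain ⟨x, hx⟩ := exists_isGreatest_monotoneOnWeights f w
  obtain ⟨C, hC, hxC⟩ := hx.1
  obtain ⟨g, hg, hgC⟩ := exists_monotone_eqOn_of_monotoneOn hC
  have upper : l0Error f w g ≤ ∑ v, w v - x := hxC ▸ l0Error_le_of_eqOn hw hgC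
  have lower (h : V → α) (hh : Monotone h) : ∑ v, w v - x ≤ l0Error f w h :=
    sub_le_l0Error_of_monotone hx.2 hh
  exact ⟨g, hg, fun h hh => upper.trans (lower h hh), x, hx, upper.antisymm (lower g hg)⟩

/-- The minimum weighted L0 error over all isotonic functions is attained and equals the
total weight minus the maximum weight of an antichain of the violator relation. -/
theorem L0_min_eq_total_sub_max_antichain {V : Type*} [PartialOrder V] [Fintype V]
    [Nonempty V] (f w : V → ℝ) (hw : ∀ v, 0 ≤ w v) :
    ∃ g : V → ℝ, Monotone g ∧
      (∀ h : V → ℝ, Monotone h →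
        ∑ v, w v * (if g v = f v then 0 else 1) ≤
          ∑ v, w v * (if h v = f v then 0 else 1)) ∧
      ∑ v, w v * (if g v = f v then 0 else 1) =
        (∑ v, w v) -
          sSup {x : ℝ | ∃ C : Finset V,
            (∀ u ∈ C, ∀ v ∈ C, ¬ Viol f u v) ∧ x = ∑ v ∈ C, w v} := by
  obtain ⟨g, hg, hmin, x, hx, hgx⟩ := L0_min_eq_total_sub_max_antichain_general f w hw
  simp only [sum_mul_ite_eq_l0Error, ← Finset.mem_coe, forall_not_viol_iff_monotoneOn]
  exact ⟨g, hg, hmin, hgx.trans (congrArg _ hx.csSup_eq.symm)⟩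
end

section
/- (L1 partitioning theorem.) Let a < b be reals with f(V) ∩ (a,b) = ∅, and define g : V → {a,b} by g(v) = a if f(v) ≤ a and g(v) = b if f(v) ≥ b. Let g′ : V → {a,b} be isotonic and minimize the weighted L1 error relative to (g, w) among all isotonic {a,b}-valued functions. Then there exists an isotonic f′ : V → ℝ that minimizes the weighted L1 error relative to (f, w) among all isotonic functions and satisfies: f′(v) ≤ a whenever g′(v) = a, and f′(v) ≥ b whenever g′(v) = b. -/
/-!
Fix an isotonic `h` and push its values out of `(a, b)`: down to at most `a` where `g' = a`, up to
at least `b` where `g' = b`. Call the result `F`. For small `δ > 0` the function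
`k = g' - δ (F - h)` is still isotonic and takes values in `[a, b]`, and pointwise `δ` times the
increase of the error from `h` to `F` is at most the decrease of the error from `g'` to `k`, so
`δ (err_f F - err_f h) ≤ err_g g' - err_g k`. Rounding `k` at a uniformly random threshold in
`(a, b]` preserves `err_g k` in expectation, so some isotonic `{a, b}`-valued function does at least
as well as `k`, and the optimality of `g'` makes the right-hand side nonpositive. Apply this to an
optimal `h`, which exists by compactness.
-/

section Threshold

variable {a b x y : ℝ}

/-- Rounding of `x` to one of the two values `a`, `b`, with cut-off `t`; the cut-off itself is
rounded to `a`. The function `g` of the theorem is `f` rounded with cut-off `a`. -/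
noncomputable def threshold (a b t x : ℝ) : ℝ := if x ≤ t then a else b

theorem threshold_eq_or_eq (a b t x : ℝ) : threshold a b t x = a ∨ threshold a b t x = b :=
  ite_eq_or_eq _ a b

theorem threshold_mem_Icc (hab : a ≤ b) (t x : ℝ) : threshold a b t x ∈ Set.Icc a b := by
  rcases threshold_eq_or_eq a b t x with h | h <;> simp [h, hab]

theorem monotone_threshold (hab : a ≤ b) (t : ℝ) : Monotone (threshold a b t) := by
  intro x y hxy
  unfold threshold
  split_ifs <;> linarith

theorem intervalIntegrable_threshold (hab : a ≤ b) (x c d : ℝ) :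
    IntervalIntegrable (fun t => threshold a b t x) MeasureTheory.volume c d := by
  have antitone_cutoff : Antitone fun t => threshold a b t x := by
    intro s t hst
    dsimp only [threshold]
    split_ifs <;> linarith
  exact antitone_cutoff.intervalIntegrable

theorem integral_threshold (hx : x ∈ Set.Icc a b) :
    ∫ t in a..b, threshold a b t x = (b - a) * x := by
  have hab : a ≤ b := hx.1.trans hx.2
  have below_x : ∫ t in a..x, threshold a b t x = ∫ _ in a..x, b :=
    intervalIntegral.integral_congr_Ioo_of_le hx.1 fun t ht => if_neg ht.2.not_ge
  have above_x : ∫ t in x..b, threshold a b t x = ∫ _ in x..b, a :=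
    intervalIntegral.integral_congr_Ioo_of_le hx.2 fun t ht => if_pos ht.1.le
  rw [← intervalIntegral.integral_add_adjacent_intervals
    (intervalIntegrable_threshold hab x a x) (intervalIntegrable_threshold hab x x b),
    below_x, above_x]
  simp only [intervalIntegral.integral_const, smul_eq_mul]
  ring

theorem integral_abs_threshold_sub (hx : x ∈ Set.Icc a b) (hy : y = a ∨ y = b) :
    ∫ t in a..b, |threshold a b t x - y| = (b - a) * |x - y| := by
  have hab : a ≤ b := hx.1.trans hx.2
  have integrable := intervalIntegrable_threshold hab x a b
  rcases hy with rfl | rfl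
  · simp only [abs_of_nonneg (sub_nonneg.2 (threshold_mem_Icc hab _ x).1),
      abs_of_nonneg (sub_nonneg.2 hx.1)]
    rw [intervalIntegral.integral_sub integrable (by simp), integral_threshold hx]
    simp only [intervalIntegral.integral_const, smul_eq_mul]
    ring
  · simp only [abs_of_nonpos (sub_nonpos.2 (threshold_mem_Icc hab _ x).2),
      abs_of_nonpos (sub_nonpos.2 hx.2), neg_sub]
    rw [intervalIntegral.integral_sub (by simp) integrable, integral_threshold hx]
    simp only [intervalIntegral.integral_const, smul_eq_mul]
    ring

end Threshold

section PushOut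

variable {a b x x' y z z' δ : ℝ}

/-- The point nearest to `x` in `(-∞, a]` if `z ≤ a`, and in `[b, ∞)` otherwise. With `z = g' v` and
`x = h v` this turns an isotonic `h` into one that respects the partition given by `g'`. -/
noncomputable def pushOut (a b z x : ℝ) : ℝ := if z ≤ a then min x a else max x b

/-- The value `z` moved by `δ` times the displacement of `x` under `pushOut`, in the opposite
direction: away from the end of `[a, b]` at which `z` sits. -/
noncomputable def counterShift (a b δ z x : ℝ) : ℝ := z - δ * (pushOut a b z x - x)

theorem pushOut_le (hz : z ≤ a) : pushOut a b z x ≤ a := by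
  simp [pushOut, hz]

theorem le_pushOut (hz : a < z) : b ≤ pushOut a b z x := by
  simp [pushOut, hz.not_ge]

theorem pushOut_le_self (hz : z ≤ a) : pushOut a b z x ≤ x := by
  simp [pushOut, hz]

theorem self_le_pushOut (hz : a < z) : x ≤ pushOut a b z x := by
  simp [pushOut, hz.not_ge]

theorem pushOut_le_pushOut (hz : z ≤ z') (hx : x ≤ x') :
    pushOut a b z x ≤ pushOut a b z' x' := by
  rcases le_or_gt z' a with hz'a | hz'a
  · simp only [pushOut, hz'a, hz.trans hz'a, if_true]
    gcongr
  · rcases le_or_gt z a with hza | hza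
    · exact (pushOut_le_self hza).trans (hx.trans (self_le_pushOut hz'a))
    · simp only [pushOut, hza.not_ge, hz'a.not_ge, if_false]
      gcongr

theorem counterShift_eq_add_abs (hz : z ≤ a) :
    counterShift a b δ z x = z + δ * |pushOut a b z x - x| := by
  rw [counterShift, abs_of_nonpos (sub_nonpos.2 (pushOut_le_self hz))]
  ring

theorem counterShift_eq_sub_abs (hz : a < z) :
    counterShift a b δ z x = z - δ * |pushOut a b z x - x| := by
  rw [counterShift, abs_of_nonneg (sub_nonneg.2 (self_le_pushOut hz))]

theorem counterShift_mem_Icc (hab : a < b) (hδ : 0 ≤ δ) (hz : z = a ∨ z = b)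
    (hsmall : δ * |pushOut a b z x - x| ≤ b - a) : counterShift a b δ z x ∈ Set.Icc a b := by
  have hpos : 0 ≤ δ * |pushOut a b z x - x| := by positivity
  rcases hz with rfl | rfl
  · rw [counterShift_eq_add_abs le_rfl]
    constructor <;> linarith
  · rw [counterShift_eq_sub_abs hab]
    constructor <;> linarith

theorem counterShift_le_counterShift (hab : a < b) (hδ : 0 ≤ δ)
    (hz : z = a ∨ z = b) (hz' : z' = a ∨ z' = b) (hzz' : z ≤ z') (hxx' : x ≤ x')
    (hsmall : δ * |pushOut a b z x - x| ≤ (b - a) / 2)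
    (hsmall' : δ * |pushOut a b z' x' - x'| ≤ (b - a) / 2) :
    counterShift a b δ z x ≤ counterShift a b δ z' x' := by
  rcases hz with rfl | rfl <;> rcases hz' with rfl | rfl
  · have displacement_anti : min x' z' - x' ≤ min x z' - x := by
      simpa [← min_sub_sub_right] using min_le_min_left 0 (sub_le_sub_left hxx' z')
    simp only [counterShift, pushOut, le_rfl, if_true]
    gcongr
  · rw [counterShift_eq_add_abs le_rfl, counterShift_eq_sub_abs hab]
    linarith
  · exact absurd hzz' hab.not_ge
  · have displacement_anti : max x' z' - x' ≤ max x z' - x := by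
      simpa [← max_sub_sub_right] using max_le_max_left 0 (sub_le_sub_left hxx' z')
    simp only [counterShift, pushOut, hab.not_ge, if_false]
    gcongr

theorem pushOut_mem_uIcc_of_same_side (hgap : y ≤ a ∨ b ≤ y) (hside : z ≤ a ↔ y ≤ a) :
    pushOut a b z x ∈ Set.uIcc x y := by
  by_cases hz : z ≤ a
  · have hy : y ≤ a := hside.1 hz
    rcases min_cases x a with ⟨hmin, -⟩ | ⟨hmin, hax⟩
    · simp [pushOut, hz, hmin]
    · simpa [pushOut, hz, hmin] using Set.mem_uIcc_of_ge hy hax.le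
  · have hy : b ≤ y := hgap.resolve_left (mt hside.2 hz)
    rcases max_cases x b with ⟨hmax, -⟩ | ⟨hmax, hxb⟩
    · simp [pushOut, hz, hmax]
    · simpa [pushOut, hz, hmax] using Set.mem_uIcc_of_le hxb.le hy

theorem abs_pushOut_sub_add_abs_of_same_side (hgap : y ≤ a ∨ b ≤ y) (hside : z ≤ a ↔ y ≤ a) :
    |pushOut a b z x - y| + |pushOut a b z x - x| = |x - y| := by
  have between := pushOut_mem_uIcc_of_same_side (x := x) hgap hside
  grind [Set.mem_uIcc]

theorem abs_counterShift_sub_of_ne (hab : a < b) (hz : z = a ∨ z = b) (hy : y = a ∨ y = b)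
    (hne : z ≠ y) (hsmall : δ * |pushOut a b z x - x| ≤ b - a) :
    |counterShift a b δ z x - y| = |z - y| - δ * |pushOut a b z x - x| := by
  rcases hz with rfl | rfl <;> rcases hy with rfl | rfl
  · exact absurd rfl hne
  · rw [counterShift_eq_add_abs le_rfl, abs_of_neg (sub_neg.2 hab), abs_of_nonpos (by linarith)]
    ring
  · rw [counterShift_eq_sub_abs hab, abs_of_pos (sub_pos.2 hab), abs_of_nonneg (by linarith)]
    ring
  · exact absurd rfl hne

theorem mul_abs_pushOut_sub_sub_le (hab : a < b) (hδ : 0 ≤ δ) (hgap : y ≤ a ∨ b ≤ y)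
    (hz : z = a ∨ z = b) (hsmall : δ * |pushOut a b z x - x| ≤ b - a) :
    δ * (|pushOut a b z x - y| - |x - y|) ≤
      |z - threshold a b a y| - |counterShift a b δ z x - threshold a b a y| := by
  by_cases hagree : z = threshold a b a y
  · have hside : z ≤ a ↔ y ≤ a := by
      rw [hagree, threshold]
      split_ifs with hy <;> simp [hy, hab]
    have error_decrease := abs_pushOut_sub_add_abs_of_same_side (x := x) hgap hside
    rw [← hagree, counterShift, sub_self, abs_zero, sub_sub_cancel_left, abs_neg, abs_mul,
      abs_of_nonneg hδ, ← error_decrease]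
    linarith
  · rw [abs_counterShift_sub_of_ne hab hz (threshold_eq_or_eq a b a y) hagree hsmall,
      sub_sub_cancel]
    gcongr
    linarith [abs_sub_le (pushOut a b z x) x y]

end PushOut

section Regression

theorem exists_pos_forall_mul_abs_le {ι : Type*} [Finite ι] (u : ι → ℝ) {ε : ℝ} (hε : 0 < ε) :
    ∃ δ > 0, ∀ i, δ * |u i| ≤ ε := by
  cases nonempty_fintype ι
  have hden : 0 < ‖u‖ + 1 := by positivity
  refine ⟨ε / (‖u‖ + 1), by positivity, fun i => ?_⟩
  rw [div_mul_eq_mul_div, div_le_iff₀ hden]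
  have : |u i| ≤ ‖u‖ := norm_le_pi_norm u i
  gcongr
  linarith

variable {V : Type*} [Fintype V] {a b : ℝ} {f g g' h k w : V → ℝ}

/-- The weighted L1 error of `h` relative to `(f, w)`. -/
def l1Error (w f h : V → ℝ) : ℝ := ∑ v, w v * |h v - f v|

theorem exists_threshold_l1Error_le (hab : a < b) (hg : ∀ v, g v = a ∨ g v = b)
    (hk : ∀ v, k v ∈ Set.Icc a b) (w : V → ℝ) :
    ∃ t, l1Error w g (fun v => threshold a b t (k v)) ≤ l1Error w g k := by
  have term_integrable (v : V) : IntervalIntegrable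
      (fun t => w v * |threshold a b t (k v) - g v|) MeasureTheory.volume a b :=
    (((intervalIntegrable_threshold hab.le (k v) a b).sub (by simp)).abs).const_mul _
  have error_integrable : IntervalIntegrable
      (fun t => l1Error w g fun v => threshold a b t (k v)) MeasureTheory.volume a b := by
    simpa only [l1Error, Finset.sum_fn] using
      IntervalIntegrable.sum Finset.univ fun v _ => term_integrable v
  have integral_error :
      ∫ t in a..b, l1Error w g (fun v => threshold a b t (k v)) = (b - a) * l1Error w g k := by
    simp only [l1Error]
    rw [intervalIntegral.integral_finsetSum fun v _ => term_integrable v, Finset.mul_sum]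
    refine Finset.sum_congr rfl fun v _ => ?_
    rw [intervalIntegral.integral_const_mul, integral_abs_threshold_sub (hk v) (hg v)]
    ring
  have average_error :
      ⨍ t in a..b, l1Error w g (fun v => threshold a b t (k v)) = l1Error w g k := by
    rw [interval_average_eq, integral_error, smul_eq_mul, inv_mul_cancel_left₀ (sub_pos.2 hab).ne']
  rw [Set.uIoc_of_le hab.le] at average_error
  obtain ⟨t, -, ht⟩ := MeasureTheory.exists_le_setAverage (by simp [hab]) (by simp)
    ((intervalIntegrable_iff_integrableOn_Ioc_of_le hab.le).1 error_integrable)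
  exact ⟨t, ht.trans_eq average_error⟩

variable [Preorder V]

theorem isMinOn_l1Error_Icc_of_two_valued (hab : a < b) (hg : ∀ v, g v = a ∨ g v = b)
    (hopt : IsMinOn (l1Error w g) {k | Monotone k ∧ ∀ v, k v = a ∨ k v = b} g') :
    IsMinOn (l1Error w g) {k | Monotone k ∧ ∀ v, k v ∈ Set.Icc a b} g' := by
  rintro k ⟨hkmono, hk⟩
  obtain ⟨t, ht⟩ := exists_threshold_l1Error_le hab hg hk w
  have hround : l1Error w g g' ≤ l1Error w g fun v => threshold a b t (k v) :=
    hopt ⟨(monotone_threshold hab.le t).comp hkmono, fun v => threshold_eq_or_eq a b t (k v)⟩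
  exact hround.trans ht

theorem l1Error_pushOut_le (hw : ∀ v, 0 ≤ w v) (hab : a < b) (hgap : ∀ v, f v ≤ a ∨ b ≤ f v)
    (hg'mono : Monotone g') (hg'val : ∀ v, g' v = a ∨ g' v = b)
    (hg'opt : IsMinOn (l1Error w fun v => threshold a b a (f v))
      {k | Monotone k ∧ ∀ v, k v = a ∨ k v = b} g') (hh : Monotone h) :
    l1Error w f (fun v => pushOut a b (g' v) (h v)) ≤ l1Error w f h := by
  set F : V → ℝ := fun v => pushOut a b (g' v) (h v)
  set g : V → ℝ := fun v => threshold a b a (f v)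
  obtain ⟨δ, hδ, hsmall⟩ := exists_pos_forall_mul_abs_le (F - h) (half_pos (sub_pos.2 hab))
  have hsmall' (v : V) : δ * |F v - h v| ≤ b - a :=
    (hsmall v).trans (half_le_self (sub_pos.2 hab).le)
  set k : V → ℝ := fun v => counterShift a b δ (g' v) (h v)
  have hkmono : Monotone k := fun u v huv =>
    counterShift_le_counterShift hab hδ.le (hg'val u) (hg'val v) (hg'mono huv) (hh huv)
      (hsmall u) (hsmall v)
  have hkIcc (v : V) : k v ∈ Set.Icc a b :=
    counterShift_mem_Icc hab hδ.le (hg'val v) (hsmall' v)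
  have g'_le_k : l1Error w g g' ≤ l1Error w g k :=
    isMinOn_l1Error_Icc_of_two_valued hab (fun v => threshold_eq_or_eq a b a (f v)) hg'opt
      ⟨hkmono, hkIcc⟩
  have error_comparison :
      δ * (l1Error w f F - l1Error w f h) ≤ l1Error w g g' - l1Error w g k := by
    simp only [l1Error, ← Finset.sum_sub_distrib, Finset.mul_sum, ← mul_sub]
    refine Finset.sum_le_sum fun v _ => ?_
    rw [mul_left_comm]
    exact mul_le_mul_of_nonneg_left
      (mul_abs_pushOut_sub_sub_le hab hδ.le (hgap v) (hg'val v) (hsmall' v)) (hw v)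
  exact sub_nonpos.1 (nonpos_of_mul_nonpos_right (error_comparison.trans (sub_nonpos.2 g'_le_k)) hδ)

theorem exists_monotone_isMinOn_l1Error (hw : ∀ v, 0 ≤ w v) (f : V → ℝ) :
    ∃ h, Monotone h ∧ IsMinOn (l1Error w f) {k | Monotone k} h := by
  have hrange : -‖f‖ ≤ ‖f‖ := neg_le_self (norm_nonneg f)
  have hf (v : V) : f v ∈ Set.Icc (-‖f‖) ‖f‖ := abs_le.1 (norm_le_pi_norm f v)
  have hcompact : IsCompact
      (Set.Icc (fun _ : V => -‖f‖) (fun _ => ‖f‖) ∩ {k : V → ℝ | Monotone k}) :=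
    isCompact_Icc.inter_right isClosed_monotone
  have hcontinuous : Continuous (l1Error w f) := by
    unfold l1Error
    fun_prop
  obtain ⟨h, ⟨-, hmono⟩, hmin⟩ := hcompact.exists_isMinOn
    ⟨fun _ => -‖f‖, ⟨le_rfl, fun _ => hrange⟩, monotone_const⟩ hcontinuous.continuousOn
  refine ⟨h, hmono, fun k hk => ?_⟩
  let clip : V → ℝ := fun v => Set.projIcc (-‖f‖) ‖f‖ hrange (k v)
  have h_le_clip : l1Error w f h ≤ l1Error w f clip :=
    hmin ⟨⟨fun v => (Set.projIcc _ _ hrange (k v)).2.1,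
      fun v => (Set.projIcc _ _ hrange (k v)).2.2⟩,
      fun _ _ huv => Set.monotone_projIcc hrange (hk huv)⟩
  have clip_le_k : l1Error w f clip ≤ l1Error w f k := by
    refine Finset.sum_le_sum fun v _ => mul_le_mul_of_nonneg_left ?_ (hw v)
    simpa only [Set.projIcc_of_mem hrange (hf v)] using
      Set.abs_projIcc_sub_projIcc (c := k v) (d := f v) hrange
  exact h_le_clip.trans clip_le_k

end Regression

theorem L1_partitioning_general {V : Type*} [Preorder V] [Fintype V]
    (f w : V → ℝ) (hw : ∀ v, 0 ≤ w v) (a b : ℝ) (hab : a < b)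
    (hgap : ∀ v, f v ≤ a ∨ b ≤ f v)
    (g' : V → ℝ) (hg'mono : Monotone g') (hg'val : ∀ v, g' v = a ∨ g' v = b)
    (hg'opt : IsMinOn (l1Error w fun v => threshold a b a (f v))
      {k | Monotone k ∧ ∀ v, k v = a ∨ k v = b} g') :
    ∃ f' : V → ℝ, Monotone f' ∧ IsMinOn (l1Error w f) {k | Monotone k} f' ∧
      ∀ v, (g' v = a → f' v ≤ a) ∧ (g' v = b → b ≤ f' v) := by
  obtain ⟨h, hmono, hmin⟩ := exists_monotone_isMinOn_l1Error hw f
  refine ⟨fun v => pushOut a b (g' v) (h v),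
    fun u v huv => pushOut_le_pushOut (hg'mono huv) (hmono huv), fun k hk => ?_,
    fun v => ⟨fun hv => pushOut_le hv.le, fun hv => le_pushOut (hab.trans_eq hv.symm)⟩⟩
  exact (l1Error_pushOut_le hw hab hgap hg'mono hg'val hg'opt hmono).trans (hmin hk)

/-- L1 partitioning theorem: if no value of `f` lies in `(a,b)`, `g` rounds `f` to
`{a,b}`, and `g'` is an isotonic `{a,b}`-valued L1 regression of `g`, then some
L1-optimal isotonic regression `f'` of `f` satisfies `f' v ≤ a` wherever `g' v = a`
and `f' v ≥ b` wherever `g' v = b`. -/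
theorem L1_partitioning {V : Type*} [PartialOrder V] [Fintype V] [Nonempty V]
    (f w : V → ℝ) (hw : ∀ v, 0 ≤ w v) (a b : ℝ) (hab : a < b)
    (hgap : ∀ v : V, f v ≤ a ∨ b ≤ f v)
    (g : V → ℝ) (hg : ∀ v : V, g v = if f v ≤ a then a else b)
    (g' : V → ℝ) (hg'mono : Monotone g') (hg'val : ∀ v, g' v = a ∨ g' v = b)
    (hg'opt : ∀ h : V → ℝ, Monotone h → (∀ v, h v = a ∨ h v = b) →
      ∑ v, w v * |g' v - g v| ≤ ∑ v, w v * |h v - g v|) :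
    ∃ f' : V → ℝ, Monotone f' ∧
      (∀ h : V → ℝ, Monotone h →
        ∑ v, w v * |f' v - f v| ≤ ∑ v, w v * |h v - f v|) ∧
      (∀ v : V, (g' v = a → f' v ≤ a) ∧ (g' v = b → b ≤ f' v)) := by
  obtain rfl : g = fun v => threshold a b a (f v) := funext hg
  exact L1_partitioning_general f w hw a b hab hgap g' hg'mono hg'val
    fun k hk => hg'opt k hk.1 hk.2
end

section
/- (Rendezvous graph is a Steiner 2-transitive closure of domination order.) Fix d ≥ 1 and k_1, …, k_d ≥ 1, and let p = (p_1, …, p_d) and q = (q_1, …, q_d) with each p_i, q_i a binary string of length k_i and p ≠ q. Then val(p_i) ≤ val(q_i) for all i (p is dominated by q) if and only if there exists a Steiner vertex s = (s_1, …, s_d), where each s_i is a Steiner string of length k_i and at least one s_i contains a *, such that p_i ⊑ s_i and s_i ⊑ q_i for all 1 ≤ i ≤ d. Moreover, when such an s exists, it is unique. -/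
/-- The value of a binary string of length `k`, most significant bit first. -/
def val {k : ℕ} (q : Fin k → Bool) : ℕ :=
  ∑ i : Fin k, if q i then 2 ^ (k - 1 - (i : ℕ)) else 0

/-- A Steiner string of length `k`: a binary prefix followed by `*`'s (here a `*` is
encoded as `none`), so the `none` positions form a suffix. -/
structure SteinerStr (k : ℕ) where
  t : Fin k → Option Bool
  suffix : ∀ i j : Fin k, i ≤ j → t i = none → t j = none

/-- A Steiner string contains a `*` iff some position is `none`. -/
def SteinerStr.hasStar {k : ℕ} (s : SteinerStr k) : Prop := ∃ i, s.t i = none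

/-- `q ⊑ t` for a binary string `q` and Steiner string `t` with binary prefix `p` of
length `ℓ`: `q` agrees with `p` on the prefix and, if `ℓ < k`, the bit of `q` at the
first `*` position is `0`. -/
def belowSteiner {k : ℕ} (q : Fin k → Bool) (s : SteinerStr k) : Prop :=
  (∀ i : Fin k, ∀ b : Bool, s.t i = some b → q i = b) ∧
  (∀ i : Fin k, s.t i = none → (∀ j : Fin k, j < i → (s.t j).isSome) → q i = false)

/-- `t ⊑ q` for a Steiner string `t` with binary prefix `p` of length `ℓ` and a binary
string `q`: `q` agrees with `p` on the prefix and, if `ℓ < k`, the bit of `q` at the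
first `*` position is `1`. -/
def steinerBelow {k : ℕ} (s : SteinerStr k) (q : Fin k → Bool) : Prop :=
  (∀ i : Fin k, ∀ b : Bool, s.t i = some b → q i = b) ∧
  (∀ i : Fin k, s.t i = none → (∀ j : Fin k, j < i → (s.t j).isSome) → q i = true)

/-!
Most-significant-bit-first values order binary strings lexicographically. If `p ⊑ s ⊑ q`, then
`p` and `q` agree on the binary prefix of `s` and differ at its first `*`, so `s` must be the
common prefix of `p` and `q` padded with `*`. Conversely, this string lies between `p` and `q`
exactly when `p` has bit `0` and `q` has bit `1` at their first difference, if there is one,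
that is, when `p ≤ q` lexicographically.
-/

theorem val_succ {k : ℕ} (q : Fin (k + 1) → Bool) :
    val q = (if q 0 then 2 ^ k else 0) + val (Fin.tail q) := by
  have weight_succ (i : Fin k) : k + 1 - 1 - (i.succ : ℕ) = k - 1 - i := by
    rw [Fin.val_succ]; omega
  simp only [val, Fin.sum_univ_succ, weight_succ, Fin.tail]
  rfl

theorem val_lt_two_pow {k : ℕ} (q : Fin k → Bool) : val q < 2 ^ k := by
  induction k with
  | zero => simp [val]
  | succ k ih =>
    have tail_lt := ih (Fin.tail q)
    rw [val_succ, pow_succ]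
    split_ifs <;> omega

theorem val_lt_val_of_first_difference {k : ℕ} {p q : Fin k → Bool} {i : Fin k}
    (agree : ∀ j < i, p j = q j) (hp : p i = false) (hq : q i = true) : val p < val q := by
  induction k with
  | zero => exact i.elim0
  | succ k ih =>
    rw [val_succ p, val_succ q]
    cases i using Fin.cases with
    | zero =>
      have tail_lt := val_lt_two_pow (Fin.tail p)
      rw [hp, hq, if_neg Bool.false_ne_true, if_pos rfl]
      omega
    | succ i =>
      have tail_lt : val (Fin.tail p) < val (Fin.tail q) :=
        ih (fun j hj => agree j.succ (Fin.succ_lt_succ_iff.2 hj)) hp hq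
      rw [agree 0 i.succ_pos]
      exact Nat.add_lt_add_left tail_lt _

theorem strictMono_val_ofLex (k : ℕ) :
    StrictMono fun p : Lex (Fin k → Bool) => val (ofLex p) := by
  rintro p q ⟨i, agree, hi⟩
  obtain ⟨hp, hq⟩ := Bool.lt_iff.1 hi
  exact val_lt_val_of_first_difference agree hp hq

theorem val_le_val_iff {k : ℕ} {p q : Fin k → Bool} : val p ≤ val q ↔ toLex p ≤ toLex q :=
  (strictMono_val_ofLex k).le_iff_le (a := toLex p) (b := toLex q)

theorem toLex_le_toLex_iff_forall {ι : Type*} {α : ι → Type*} [LinearOrder ι] [WellFoundedLT ι]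
    [∀ i, LinearOrder (α i)] {x y : ∀ i, α i} :
    toLex x ≤ toLex y ↔ ∀ i, (∀ j < i, x j = y j) → x i ≤ y i := by
  refine ⟨fun hxy i agree => Pi.apply_le_of_toLex hxy agree, fun h => ?_⟩
  by_contra! hyx
  obtain ⟨i, agree, hi⟩ := hyx
  exact (h i fun j hj => (agree j hj).symm).not_gt hi

attribute [ext] SteinerStr

namespace SteinerStr

variable {k : ℕ} {p q : Fin k → Bool} {s : SteinerStr k} {i : Fin k}

/-- Position `i` holds the first `*` of `s`; when `s` has binary prefix of length `ℓ < k`, this is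
the (zero-based) position `ℓ`. -/
def IsFirstStar (s : SteinerStr k) (i : Fin k) : Prop :=
  s.t i = none ∧ ∀ j < i, (s.t j).isSome

theorem exists_isFirstStar_le (hi : s.t i = none) : ∃ j ≤ i, s.IsFirstStar j := by
  obtain ⟨j, hji, hj⟩ := exists_minimal_le_of_wellFoundedLT (fun l => s.t l = none) i hi
  exact ⟨j, hji, hj.prop, fun l hl => Option.isSome_iff_ne_none.2 (hj.not_prop_of_lt hl)⟩

theorem t_eq_none_iff_exists_ne (hp : belowSteiner p s) (hq : steinerBelow s q) :
    s.t i = none ↔ ∃ j ≤ i, p j ≠ q j := by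
  constructor
  · intro hi
    obtain ⟨j, hji, hj, hbefore⟩ := exists_isFirstStar_le hi
    have hpj : p j = false := hp.2 j hj hbefore
    have hqj : q j = true := hq.2 j hj hbefore
    exact ⟨j, hji, by simp [hpj, hqj]⟩
  · rintro ⟨j, hji, hne⟩
    refine s.suffix j i hji (Option.eq_none_iff_forall_ne_some.2 fun b hb => hne ?_)
    exact (hp.1 j b hb).trans (hq.1 j b hb).symm

/-- The longest common prefix of `p` and `q`, padded with `*`: the meeting point of the edges out
of `p` and into `q` in the rendezvous graph. -/
def commonPrefix (p q : Fin k → Bool) : SteinerStr k where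
  t i := if ∃ j ≤ i, p j ≠ q j then none else some (p i)
  suffix i i' hii' hi := by
    simp only [ite_eq_left_iff, reduceCtorEq, imp_false, not_not] at hi ⊢
    obtain ⟨j, hji, hne⟩ := hi
    exact ⟨j, hji.trans hii', hne⟩

theorem commonPrefix_t_eq_none_iff :
    (commonPrefix p q).t i = none ↔ ∃ j ≤ i, p j ≠ q j := by
  simp [commonPrefix]

theorem commonPrefix_t_eq_some_iff {b : Bool} :
    (commonPrefix p q).t i = some b ↔ (∀ j ≤ i, p j = q j) ∧ p i = b := by
  simp [commonPrefix]

theorem hasStar_commonPrefix (hpq : p ≠ q) : (commonPrefix p q).hasStar := by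
  obtain ⟨i, hi⟩ := Function.ne_iff.1 hpq
  exact ⟨i, commonPrefix_t_eq_none_iff.2 ⟨i, le_rfl, hi⟩⟩

theorem isFirstStar_commonPrefix_iff :
    (commonPrefix p q).IsFirstStar i ↔ (∀ j < i, p j = q j) ∧ p i ≠ q i := by
  constructor
  · rintro ⟨hi, hbefore⟩
    have agree : ∀ j < i, p j = q j := fun j hj => by
      obtain ⟨b, hb⟩ := Option.isSome_iff_exists.1 (hbefore j hj)
      exact (commonPrefix_t_eq_some_iff.1 hb).1 j le_rfl
    obtain ⟨j, hji, hne⟩ := commonPrefix_t_eq_none_iff.1 hi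
    obtain rfl : j = i := hji.eq_of_not_lt fun hlt => hne (agree j hlt)
    exact ⟨agree, hne⟩
  · rintro ⟨agree, hne⟩
    refine ⟨commonPrefix_t_eq_none_iff.2 ⟨i, le_rfl, hne⟩, fun j hj => ?_⟩
    exact Option.isSome_iff_exists.2
      ⟨p j, commonPrefix_t_eq_some_iff.2 ⟨fun l hl => agree l (hl.trans_lt hj), rfl⟩⟩

theorem eq_commonPrefix (hp : belowSteiner p s) (hq : steinerBelow s q) :
    s = commonPrefix p q := by
  ext i : 2
  cases hi : s.t i with
  | none => exact (commonPrefix_t_eq_none_iff.2 ((t_eq_none_iff_exists_ne hp hq).1 hi)).symm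
  | some b =>
    have agree : ∀ j ≤ i, p j = q j := by
      have not_star : ¬ s.t i = none := by simp [hi]
      simpa [t_eq_none_iff_exists_ne hp hq] using not_star
    exact (commonPrefix_t_eq_some_iff.2 ⟨agree, hp.1 i b hi⟩).symm

theorem belowSteiner_commonPrefix_iff :
    belowSteiner p (commonPrefix p q) ↔
      ∀ i, (commonPrefix p q).IsFirstStar i → p i = false :=
  ⟨fun h i hi => h.2 i hi.1 hi.2, fun h =>
    ⟨fun _ _ hb => (commonPrefix_t_eq_some_iff.1 hb).2, fun i hi hbefore => h i ⟨hi, hbefore⟩⟩⟩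

theorem commonPrefix_steinerBelow_iff :
    steinerBelow (commonPrefix p q) q ↔
      ∀ i, (commonPrefix p q).IsFirstStar i → q i = true := by
  refine ⟨fun h i hi => h.2 i hi.1 hi.2, fun h => ⟨fun i b hb => ?_, fun i hi hbefore =>
    h i ⟨hi, hbefore⟩⟩⟩
  obtain ⟨agree, hpi⟩ := commonPrefix_t_eq_some_iff.1 hb
  exact (agree i le_rfl).symm.trans hpi

theorem commonPrefix_between_iff :
    belowSteiner p (commonPrefix p q) ∧ steinerBelow (commonPrefix p q) q ↔
      val p ≤ val q := by
  have bit_le_iff (a b : Bool) : a ≤ b ↔ (a ≠ b → a = false ∧ b = true) := by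
    revert a b; decide
  simp only [belowSteiner_commonPrefix_iff, commonPrefix_steinerBelow_iff, val_le_val_iff,
    toLex_le_toLex_iff_forall, isFirstStar_commonPrefix_iff, bit_le_iff, ← forall_and, and_imp]

theorem between_iff :
    belowSteiner p s ∧ steinerBelow s q ↔ s = commonPrefix p q ∧ val p ≤ val q := by
  constructor
  · rintro ⟨hp, hq⟩
    obtain rfl := eq_commonPrefix hp hq
    exact ⟨rfl, commonPrefix_between_iff.1 ⟨hp, hq⟩⟩
  · rintro ⟨rfl, hle⟩
    exact commonPrefix_between_iff.2 hle

end SteinerStr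

theorem rendezvous_steiner_two_transitive_general {ι : Type*} (k : ι → ℕ)
    (p q : (i : ι) → Fin (k i) → Bool) (hpq : p ≠ q) :
    ((∀ i, val (p i) ≤ val (q i)) ↔
      ∃ s : (i : ι) → SteinerStr (k i),
        (∃ i, (s i).hasStar) ∧ ∀ i, belowSteiner (p i) (s i) ∧ steinerBelow (s i) (q i)) ∧
    (∀ s s' : (i : ι) → SteinerStr (k i),
      ((∃ i, (s i).hasStar) ∧ ∀ i, belowSteiner (p i) (s i) ∧ steinerBelow (s i) (q i)) →
      ((∃ i, (s' i).hasStar) ∧ ∀ i, belowSteiner (p i) (s' i) ∧ steinerBelow (s' i) (q i)) →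
      s = s') := by
  simp only [SteinerStr.between_iff]
  refine ⟨⟨fun dominated => ?_, fun ⟨_, _, hs⟩ i => (hs i).2⟩, fun s s' ⟨_, hs⟩ ⟨_, hs'⟩ => ?_⟩
  · obtain ⟨i, hi⟩ := Function.ne_iff.1 hpq
    exact ⟨fun i => SteinerStr.commonPrefix (p i) (q i),
      ⟨i, SteinerStr.hasStar_commonPrefix hi⟩, fun i => ⟨rfl, dominated i⟩⟩
  · exact funext fun i => (hs i).1.trans (hs' i).1.symm

/-- The rendezvous graph is a Steiner 2-transitive closure of the domination order:
for distinct points `p ≠ q` (each coordinate a binary string), `p` is dominated by `q`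
iff there is a Steiner vertex `s` (a tuple of Steiner strings, at least one containing a
`*`) with `p i ⊑ s i` and `s i ⊑ q i` in every coordinate; and such an `s` is unique. -/
theorem rendezvous_steiner_two_transitive {d : ℕ} (hd : 1 ≤ d)
    (k : Fin d → ℕ) (hk : ∀ i, 1 ≤ k i)
    (p q : (i : Fin d) → Fin (k i) → Bool) (hpq : p ≠ q) :
    ((∀ i : Fin d, val (p i) ≤ val (q i)) ↔
      ∃ s : (i : Fin d) → SteinerStr (k i),
        (∃ i, (s i).hasStar) ∧
        ∀ i : Fin d, belowSteiner (p i) (s i) ∧ steinerBelow (s i) (q i)) ∧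
    (∀ s s' : (i : Fin d) → SteinerStr (k i),
      ((∃ i, (s i).hasStar) ∧ ∀ i : Fin d, belowSteiner (p i) (s i) ∧ steinerBelow (s i) (q i)) →
      ((∃ i, (s' i).hasStar) ∧ ∀ i : Fin d, belowSteiner (p i) (s' i) ∧ steinerBelow (s' i) (q i)) →
      s = s') :=
  rendezvous_steiner_two_transitive_general k p q hpq
end
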